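/- Let S be a factorizable inverse monoid with semilattice of idempotents E. (iii) If e, f ∈ E, e is central in S (resp. both e and f are central in S), and the join e∨f exists in S, then e∨f is an idempotent that is central in f↑ (resp. central in S). (iv) If e₁, e₂, f ∈ E, e₁ is central in e₂↑, and the joins e₁∨f and e₂∨f exist in S, then e₁∨f is central in (e₂∨f)↑. -/

import Mathlib

/-- An inverse monoid: a monoid in which every element `a` has an inverse `a⁻¹`
satisfying `a * a⁻¹ * a = a` and `a⁻¹ * a * a⁻¹ = a⁻¹`, and this inverse is unique. -/
class InverseMonoid (S : Type*) extends Monoid S, Inv S where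
  mul_inv_mul : ∀ a : S, a * a⁻¹ * a = a
  inv_mul_inv : ∀ a : S, a⁻¹ * a * a⁻¹ = a⁻¹
  inv_unique : ∀ a b : S, a * b * a = a → b * a * b = b → b = a⁻¹

/-- An inverse monoid with a (two-sided absorbing) zero element. -/
class InverseMonoidWithZero (S : Type*) extends InverseMonoid S, Zero S where
  zero_mul : ∀ a : S, 0 * a = 0
  mul_zero : ∀ a : S, a * 0 = 0

/-- The natural partial order on an inverse monoid: `a ≤ b` iff `a = e * b`
for some idempotent `e`. -/
def NatLe {S : Type*} [Monoid S] (a b : S) : Prop :=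
  ∃ e : S, IsIdempotentElem e ∧ a = e * b

/-- The filter `e↑ = {s | e ≤ s}` generated by `e`. -/
def upfilter {S : Type*} [Monoid S] (e : S) : Set S := {s | NatLe e s}

/-- `c` is central in (a subset) `T`: it belongs to `T` and commutes with all elements of `T`. -/
def CentralIn {S : Type*} [Mul S] (T : Set S) (c : S) : Prop :=
  c ∈ T ∧ ∀ s ∈ T, c * s = s * c

/-- A monoid is factorizable if every element is a product of an idempotent and a unit. -/
def Factorizable (S : Type*) [Monoid S] : Prop :=
  ∀ s : S, ∃ e g : S, IsIdempotentElem e ∧ IsUnit g ∧ s = e * g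

/-- The natural connection `θ`: for an (idempotent) `e`, the subgroup
`eθ = {g ∈ G : e * g = e}` of the group of units. -/
def natconn {S : Type*} [Monoid S] (e : S) : Subgroup Sˣ where
  carrier := {g : Sˣ | e * (g : S) = e}
  one_mem' := by simp
  mul_mem' := by
    intro a b ha hb
    simp only [Set.mem_setOf_eq, Units.val_mul] at *
    rw [← mul_assoc, ha, hb]
  inv_mem' := by
    intro a ha
    simp only [Set.mem_setOf_eq] at *
    nth_rewrite 1 [← ha]
    rw [mul_assoc, ← Units.val_mul, mul_inv_cancel, Units.val_one, mul_one]

/-- The natural connection is a dual isomorphism from the idempotents onto a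
sublattice of the lattice of subgroups of the group of units: it is injective on
idempotents, order-reversing in both directions, and its image is closed under
joins and meets of subgroups. -/
def NatconnDualIso (S : Type*) [Monoid S] : Prop :=
  (∀ e f : S, IsIdempotentElem e → IsIdempotentElem f → natconn e = natconn f → e = f) ∧
  (∀ e f : S, IsIdempotentElem e → IsIdempotentElem f →
    (NatLe e f ↔ natconn f ≤ natconn e)) ∧
  (∀ e f : S, IsIdempotentElem e → IsIdempotentElem f →
    (∃ h : S, IsIdempotentElem h ∧ natconn h = natconn e ⊔ natconn f) ∧
    (∃ h : S, IsIdempotentElem h ∧ natconn h = natconn e ⊓ natconn f))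

/-- `j` is the join (least upper bound) of `e` and `f` with respect to the natural order. -/
def IsNatJoin {S : Type*} [Monoid S] (e f j : S) : Prop :=
  NatLe e j ∧ NatLe f j ∧ ∀ x : S, NatLe e x → NatLe f x → NatLe j x

/-- `F_{e,f} = f · e↑`. -/
def Fef {S : Type*} [Monoid S] (e f : S) : Set S := (f * ·) '' upfilter e

/-- `UF_{e,f}`: the group of units of the monoid `F_{e,f}` (whose identity is `f`). -/
def UFef {S : Type*} [Monoid S] (e f : S) : Set S :=
  {x ∈ Fef e f | ∃ y ∈ Fef e f, x * y = f ∧ y * x = f}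

/-- The centre of a subset `T`. -/
def ZIn {S : Type*} [Mul S] (T : Set S) : Set S := {x ∈ T | ∀ y ∈ T, x * y = y * x}

/-- Two subsets are isomorphic as semigroups (with the induced multiplication). -/
def SubIso {S : Type*} [Mul S] (A B : Set S) : Prop :=
  ∃ φ : S → S, Set.BijOn φ A B ∧ ∀ a ∈ A, ∀ b ∈ A, φ (a * b) = φ a * φ b

/-- A subcentral idempotent series between `0` and `a`. -/
def IsSubcentralSeriesBetween {S : Type*} [Monoid S] [Zero S] (n : ℕ) (c : ℕ → S) (a : S) :
    Prop :=
  c 0 = 0 ∧ c n = a ∧ (∀ i ≤ n, IsIdempotentElem (c i)) ∧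
    ∀ i < n, CentralIn (upfilter (c i)) (c (i + 1))

/-- A subcentral idempotent series of `S` (between `0` and `1`). -/
def IsSubcentralSeries {S : Type*} [Monoid S] [Zero S] (n : ℕ) (c : ℕ → S) : Prop :=
  IsSubcentralSeriesBetween n c 1

/-- A central idempotent series of `S`. -/
def IsCentralSeries {S : Type*} [Monoid S] [Zero S] (n : ℕ) (c : ℕ → S) : Prop :=
  c 0 = 0 ∧ c n = 1 ∧ (∀ i ≤ n, IsIdempotentElem (c i)) ∧
    (∀ i < n, NatLe (c i) (c (i + 1))) ∧
    ∀ i < n, CentralIn Set.univ (c (i + 1))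

/-- A subcentral idempotent: one occurring in some subcentral idempotent series of `S`. -/
def IsSubcentralIdem {S : Type*} [Monoid S] [Zero S] (e : S) : Prop :=
  ∃ (n : ℕ) (c : ℕ → S), IsSubcentralSeries n c ∧ ∃ i ≤ n, c i = e

/-- A `G`-nilpotent series: a chain of central idempotents from `0` to `1` with
`F_{eᵢ,eᵢ₊₁} ⊆ Z(F_{0,eᵢ₊₁})`. -/
def GNilpotentSeries {S : Type*} [Monoid S] [Zero S] (n : ℕ) (c : ℕ → S) : Prop :=
  c 0 = 0 ∧ c n = 1 ∧ (∀ i ≤ n, IsIdempotentElem (c i) ∧ CentralIn Set.univ (c i)) ∧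
    (∀ i < n, NatLe (c i) (c (i + 1))) ∧
    ∀ i < n, Fef (c i) (c (i + 1)) ⊆ ZIn (Fef 0 (c (i + 1)))

/-- A `G`-solvable series: a chain of central idempotents from `0` to `1` with
each `F_{eᵢ,eᵢ₊₁}` commutative. -/
def GSolvableSeries {S : Type*} [Monoid S] [Zero S] (n : ℕ) (c : ℕ → S) : Prop :=
  c 0 = 0 ∧ c n = 1 ∧ (∀ i ≤ n, IsIdempotentElem (c i) ∧ CentralIn Set.univ (c i)) ∧
    (∀ i < n, NatLe (c i) (c (i + 1))) ∧
    ∀ i < n, ∀ x ∈ Fef (c i) (c (i + 1)), ∀ y ∈ Fef (c i) (c (i + 1)), x * y = y * x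

/-- `S` is `G`-nilpotent. -/
def GNilpotent (S : Type*) [Monoid S] [Zero S] : Prop :=
  ∃ (n : ℕ) (c : ℕ → S), GNilpotentSeries n c

/-- `S` is `G`-solvable. -/
def GSolvable (S : Type*) [Monoid S] [Zero S] : Prop :=
  ∃ (n : ℕ) (c : ℕ → S), GSolvableSeries n c

/-- Two idempotent series are isomorphic: same length, and a one-to-one correspondence
between their factors under which corresponding factors are isomorphic. -/
def SeriesIso {S : Type*} [Monoid S] (n : ℕ) (c : ℕ → S) (n' : ℕ) (d : ℕ → S) : Prop :=
  n = n' ∧ ∃ σ : ℕ → ℕ, Set.BijOn σ {i | i < n} {i | i < n'} ∧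
    ∀ i < n, SubIso (Fef (c i) (c (i + 1))) (Fef (d (σ i)) (d (σ i + 1)))

/-- A composition series (for a kind `P` of series): it has no repeated terms, and any
refinement of it (of the same kind) only repeats its terms. -/
def IsCompositionOf {S : Type*} (P : ℕ → (ℕ → S) → Prop) (n : ℕ) (c : ℕ → S) : Prop :=
  P n c ∧ (∀ i ≤ n, ∀ j ≤ n, c i = c j → i = j) ∧
    ∀ (m : ℕ) (d : ℕ → S), P m d → (∀ i ≤ n, ∃ j ≤ m, d j = c i) →
      ∀ j ≤ m, ∃ i ≤ n, d j = c i

/-!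
Conjugation by a unit is an order automorphism, so a unit commuting with `e` and `f` commutes with
their join `j`. As `j ≤ 1` is idempotent, it commutes with idempotents too, hence with every element
of a set `T ⊆ S` each of whose elements is an idempotent times a unit lying in `T`, provided `e` and
`f` commute with `T`. When `S` is factorizable, filters `d↑` are such sets because `h * g ≤ g` for
idempotent `h`. Moreover an idempotent `f` commutes with `f↑`, as `f * s = f = s * f` if `f ≤ s`.
-/

namespace InverseMonoid

variable {S : Type*} [InverseMonoid S] {e f : S}

theorem inv_inv (a : S) : (a⁻¹)⁻¹ = a :=
  (inv_unique a⁻¹ a (inv_mul_inv a) (mul_inv_mul a)).symm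

theorem inv_eq_self (he : IsIdempotentElem e) : e⁻¹ = e :=
  (inv_unique e e (by rw [he.eq, he.eq]) (by rw [he.eq, he.eq])).symm

theorem isIdempotentElem_mul_inv (a : S) : IsIdempotentElem (a * a⁻¹) := by
  rw [IsIdempotentElem, ← mul_assoc, mul_inv_mul]

theorem mul_mul_inv_mul_of_isIdempotentElem (he : IsIdempotentElem e) (hf : IsIdempotentElem f) :
    f * (e * f)⁻¹ * e = (e * f)⁻¹ := by
  refine inv_unique (e * f) _ ?_ ?_
  · calc e * f * (f * (e * f)⁻¹ * e) * (e * f)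
        = e * (f * f) * (e * f)⁻¹ * ((e * e) * f) := by simp only [mul_assoc]
      _ = e * f := by rw [he.eq, hf.eq, mul_inv_mul]
  · calc f * (e * f)⁻¹ * e * (e * f) * (f * (e * f)⁻¹ * e)
        = f * ((e * f)⁻¹ * ((e * e) * (f * f)) * (e * f)⁻¹) * e := by simp only [mul_assoc]
      _ = f * (e * f)⁻¹ * e := by rw [he.eq, hf.eq, inv_mul_inv]

theorem isIdempotentElem_mul (he : IsIdempotentElem e) (hf : IsIdempotentElem f) :
    IsIdempotentElem (e * f) := by
  have inv_mul_left : (e * f)⁻¹ * e = (e * f)⁻¹ := by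
    rw [← mul_mul_inv_mul_of_isIdempotentElem he hf, mul_assoc, he.eq]
  have mul_inv_right : f * (e * f)⁻¹ = (e * f)⁻¹ := by
    rw [← mul_mul_inv_mul_of_isIdempotentElem he hf, ← mul_assoc, ← mul_assoc, hf.eq]
  have inv_idem : IsIdempotentElem (e * f)⁻¹ :=
    calc (e * f)⁻¹ * (e * f)⁻¹
        = ((e * f)⁻¹ * e) * (f * (e * f)⁻¹) := by rw [inv_mul_left, mul_inv_right]
      _ = (e * f)⁻¹ * (e * f) * (e * f)⁻¹ := by simp only [mul_assoc]
      _ = (e * f)⁻¹ := inv_mul_inv _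
  rwa [← inv_inv (e * f), inv_eq_self inv_idem]

theorem commute_of_isIdempotentElem (he : IsIdempotentElem e) (hf : IsIdempotentElem f) :
    Commute e f := by
  have mul_mul_mul_self {a b : S} (ha : IsIdempotentElem a) (hb : IsIdempotentElem b) :
      a * b * (b * a) * (a * b) = a * b :=
    calc a * b * (b * a) * (a * b) = a * (b * b) * ((a * a) * b) := by simp only [mul_assoc]
      _ = a * b := by rw [ha.eq, hb.eq, (isIdempotentElem_mul ha hb).eq]
  calc e * f = (e * f)⁻¹ := (inv_eq_self (isIdempotentElem_mul he hf)).symm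
    _ = f * e := (inv_unique _ _ (mul_mul_mul_self he hf) (mul_mul_mul_self hf he)).symm

end InverseMonoid

namespace NatLe

theorem one_right_iff {M : Type*} [Monoid M] {a : M} : NatLe a 1 ↔ IsIdempotentElem a :=
  ⟨fun ⟨_, he, hae⟩ => by rwa [hae, mul_one], fun ha => ⟨a, ha, (mul_one a).symm⟩⟩

theorem map {M N : Type*} [Monoid M] [Monoid N] (φ : M →* N) {a b : M} (h : NatLe a b) :
    NatLe (φ a) (φ b) := by
  obtain ⟨e, he, rfl⟩ := h
  exact ⟨φ e, he.map φ, map_mul φ e b⟩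

variable {S : Type*} [InverseMonoid S] {a b c f s : S}

theorem trans (hab : NatLe a b) (hbc : NatLe b c) : NatLe a c := by
  obtain ⟨e, he, rfl⟩ := hab
  obtain ⟨k, hk, rfl⟩ := hbc
  exact ⟨e * k, InverseMonoid.isIdempotentElem_mul he hk, (mul_assoc e k c).symm⟩

theorem antisymm (hab : NatLe a b) (hba : NatLe b a) : a = b := by
  obtain ⟨e, he, rfl⟩ := hab
  obtain ⟨k, hk, hb⟩ := hba
  calc e * b = e * (k * (e * b)) := by rw [← hb]
    _ = k * ((e * e) * b) := by
      simp only [← mul_assoc, (InverseMonoid.commute_of_isIdempotentElem he hk).eq]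
    _ = b := by rw [he.eq, ← hb]

theorem mul_eq_left (hf : IsIdempotentElem f) (h : NatLe f s) : f * s = f := by
  obtain ⟨k, hk, hfk⟩ := h
  have hp : IsIdempotentElem (k * (s * s⁻¹)) :=
    InverseMonoid.isIdempotentElem_mul hk (InverseMonoid.isIdempotentElem_mul_inv s)
  have hps : k * (s * s⁻¹) * s = f := by rw [mul_assoc, InverseMonoid.mul_inv_mul, hfk]
  have hfs : f * s⁻¹ = k * (s * s⁻¹) := by rw [hfk, mul_assoc]
  have hpf : k * (s * s⁻¹) = f :=
    calc k * (s * s⁻¹) = f * (k * (s * s⁻¹)) := by rw [← hfs, ← mul_assoc, hf.eq]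
      _ = k * (s * s⁻¹) * f := InverseMonoid.commute_of_isIdempotentElem hf hp
      _ = f := by rw [← hps, ← mul_assoc, hp.eq]
  rwa [hpf] at hps

theorem mul_eq_right (hf : IsIdempotentElem f) (h : NatLe f s) : s * f = f := by
  have hfs : f * s = f := h.mul_eq_left hf
  have hsf : IsIdempotentElem (s * f) := by
    rw [IsIdempotentElem, mul_assoc, ← mul_assoc f, hfs, hf.eq]
  calc s * f = s * f * f := by rw [mul_assoc, hf.eq]
    _ = f * (s * f) := InverseMonoid.commute_of_isIdempotentElem hsf hf
    _ = f := by rw [← mul_assoc, hfs, hf.eq]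

theorem upfilter_subset (h : NatLe a b) : upfilter b ⊆ upfilter a :=
  fun _ hs => h.trans hs

end NatLe

theorem mem_centralizer_upfilter {S : Type*} [InverseMonoid S] {f : S} (hf : IsIdempotentElem f) :
    f ∈ (upfilter f).centralizer :=
  fun _ hs => (hs.mul_eq_right hf).trans (hs.mul_eq_left hf).symm

theorem CentralIn.mem_centralizer {M : Type*} [Mul M] {T : Set M} {c : M} (h : CentralIn T c) :
    c ∈ T.centralizer :=
  fun s hs => (h.2 s hs).symm

theorem centralIn_of_mem_centralizer {M : Type*} [Mul M] {T : Set M} {c : M} (hcT : c ∈ T)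
    (hc : c ∈ T.centralizer) : CentralIn T c :=
  ⟨hcT, fun s hs => (hc s hs).symm⟩

/-- Factorizability relative to a subset `T`: every element of `T` is an idempotent times a unit of
the ambient monoid that lies in `T`. The idempotent and the inverse of the unit need not lie in
`T`. -/
def FactorizableIn {M : Type*} [Monoid M] (T : Set M) : Prop :=
  ∀ s ∈ T, ∃ (h : M) (g : Mˣ), IsIdempotentElem h ∧ (g : M) ∈ T ∧ s = h * g

namespace Factorizable

theorem factorizableIn_univ {M : Type*} [Monoid M] (hM : Factorizable M) :
    FactorizableIn (Set.univ : Set M) := by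
  intro s _
  obtain ⟨h, _, hh, ⟨g, rfl⟩, rfl⟩ := hM s
  exact ⟨h, g, hh, Set.mem_univ _, rfl⟩

theorem factorizableIn_upfilter {S : Type*} [InverseMonoid S] (hS : Factorizable S) (d : S) :
    FactorizableIn (upfilter d) := by
  intro s hs
  obtain ⟨h, _, hh, ⟨g, rfl⟩, rfl⟩ := hS s
  exact ⟨h, g, hh, hs.trans ⟨h, hh, rfl⟩, rfl⟩

end Factorizable

namespace IsNatJoin

theorem map {M N : Type*} [Monoid M] [Monoid N] (φ : M ≃* N) {e f j : M} (h : IsNatJoin e f j) :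
    IsNatJoin (φ e) (φ f) (φ j) := by
  obtain ⟨hej, hfj, hleast⟩ := h
  refine ⟨hej.map φ.toMonoidHom, hfj.map φ.toMonoidHom, fun x hex hfx => ?_⟩
  have hjx : NatLe j (φ.symm x) := hleast _
    (by simpa using hex.map φ.symm.toMonoidHom) (by simpa using hfx.map φ.symm.toMonoidHom)
  simpa using hjx.map φ.toMonoidHom

theorem isIdempotentElem {M : Type*} [Monoid M] {e f j : M} (h : IsNatJoin e f j)
    (he : IsIdempotentElem e) (hf : IsIdempotentElem f) : IsIdempotentElem j :=
  NatLe.one_right_iff.1 (h.2.2 1 (NatLe.one_right_iff.2 he) (NatLe.one_right_iff.2 hf))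

variable {S : Type*} [InverseMonoid S] {e f j : S}

theorem unique {j' : S} (h : IsNatJoin e f j) (h' : IsNatJoin e f j') : j = j' :=
  (h.2.2 j' h'.1 h'.2.1).antisymm (h'.2.2 j h.1 h.2.1)

theorem commute_unit (h : IsNatJoin e f j) {g : Sˣ} (he : Commute (g : S) e)
    (hf : Commute (g : S) f) : Commute (g : S) j := by
  let conj : S ≃* S := MulDistribMulAction.toMulEquiv S (ConjAct.toConjAct g)
  have conj_eq_iff (a : S) : conj a = a ↔ Commute (g : S) a := g.mul_inv_eq_iff_eq_mul
  have hconj : IsNatJoin e f (conj j) := by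
    simpa only [(conj_eq_iff e).2 he, (conj_eq_iff f).2 hf] using h.map conj
  exact (conj_eq_iff j).1 (hconj.unique h)

theorem mem_centralizer {T : Set S} (hT : FactorizableIn T) (h : IsNatJoin e f j)
    (he : IsIdempotentElem e) (hf : IsIdempotentElem f) (heT : e ∈ T.centralizer)
    (hfT : f ∈ T.centralizer) : j ∈ T.centralizer := by
  intro s hs
  obtain ⟨k, g, hk, hgT, rfl⟩ := hT s hs
  have hkj : Commute k j :=
    InverseMonoid.commute_of_isIdempotentElem hk (h.isIdempotentElem he hf)
  exact hkj.mul_left (h.commute_unit (heT g hgT) (hfT g hgT))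

end IsNatJoin

/-- In a factorizable inverse monoid:
(iii) if `e` is central in `S` (resp. both `e` and `f` are central) and `e ∨ f` exists,
then `e ∨ f` is an idempotent central in `f↑` (resp. central in `S`);
(iv) if `e₁` is central in `e₂↑` and `e₁ ∨ f`, `e₂ ∨ f` exist, then `e₁ ∨ f` is central
in `(e₂ ∨ f)↑`. -/
theorem stmt_2 {S : Type*} [InverseMonoid S] (hfact : Factorizable S) :
    (∀ e f j : S, IsIdempotentElem e → IsIdempotentElem f →
      CentralIn Set.univ e → IsNatJoin e f j →
      IsIdempotentElem j ∧ CentralIn (upfilter f) j) ∧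
    (∀ e f j : S, IsIdempotentElem e → IsIdempotentElem f →
      CentralIn Set.univ e → CentralIn Set.univ f → IsNatJoin e f j →
      IsIdempotentElem j ∧ CentralIn Set.univ j) ∧
    (∀ e₁ e₂ f j₁ j₂ : S, IsIdempotentElem e₁ → IsIdempotentElem e₂ → IsIdempotentElem f →
      CentralIn (upfilter e₂) e₁ → IsNatJoin e₁ f j₁ → IsNatJoin e₂ f j₂ →
      CentralIn (upfilter j₂) j₁) := by
  refine ⟨fun e f j he hf hec hj => ?_, fun e f j he hf hec hfc hj => ?_,
    fun e₁ e₂ f j₁ j₂ he₁ _ hf he₁c hj₁ hj₂ => ?_⟩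
  · have hef : e ∈ (upfilter f).centralizer :=
      Set.centralizer_subset (Set.subset_univ _) hec.mem_centralizer
    exact ⟨hj.isIdempotentElem he hf, centralIn_of_mem_centralizer hj.2.1 <|
      hj.mem_centralizer (hfact.factorizableIn_upfilter f) he hf hef (mem_centralizer_upfilter hf)⟩
  · exact ⟨hj.isIdempotentElem he hf, centralIn_of_mem_centralizer (Set.mem_univ j) <|
      hj.mem_centralizer hfact.factorizableIn_univ he hf hec.mem_centralizer hfc.mem_centralizer⟩
  · have hj₂j₁ : NatLe j₂ j₁ := hj₂.2.2 j₁ (NatLe.trans he₁c.1 hj₁.1) hj₁.2.1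
    have he₁j₂ : e₁ ∈ (upfilter j₂).centralizer :=
      Set.centralizer_subset hj₂.1.upfilter_subset he₁c.mem_centralizer
    have hfj₂ : f ∈ (upfilter j₂).centralizer :=
      Set.centralizer_subset hj₂.2.1.upfilter_subset (mem_centralizer_upfilter hf)
    exact centralIn_of_mem_centralizer hj₂j₁ <|
      hj₁.mem_centralizer (hfact.factorizableIn_upfilter j₂) he₁ hf he₁j₂ hfj₂
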